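/- arXiv:2604.24529 — 2 statements merged into one kernel-verified Lean document; each statement's English description precedes it below -/
import Mathlib

section
/- Let Y be a closed subspace of C[0,1] that is isomorphic (linearly homeomorphic) to c₀. Then for every x*, e* in the unit sphere of C[0,1]* = M[0,1] such that e* has no atoms (i.e., e*({t}) = 0 for every t ∈ [0,1]), every ε > 0, and every f in the unit sphere of C[0,1] satisfying e*(f) > 1 − ε, there exists v* in the closed unit ball of M[0,1] such that v*(f) > 1 − ε, ‖x* + v*‖ > 2 − ε, and ‖(e* − v*)|_Y‖ < ε. -/
open MeasureTheory

/-- The unit interval `[0,1]` as a subtype of `ℝ`. -/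
abbrev I01 : Type := Set.Icc (0 : ℝ) 1

/-- The Banach space `C[0,1]` of continuous real functions on `[0,1]` with the sup norm. -/
abbrev C01 : Type := C(I01, ℝ)

/-- The Banach space `c₀` of real sequences converging to `0`, with the sup norm. -/
abbrev c0 : Type := ZeroAtInftyContinuousMap ℕ ℝ

/-- The total variation norm of a signed Radon measure on `[0,1]`; this is the norm of
`M[0,1] = C[0,1]*`. -/
noncomputable def smNorm (μ : SignedMeasure I01) : ℝ :=
  (μ.totalVariation Set.univ).toReal

/-- The action of a signed measure `μ ∈ M[0,1]` on `f ∈ C[0,1]` by integration. -/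
noncomputable def smInt (μ : SignedMeasure I01) (f : C01) : ℝ :=
  ∫ x, f x ∂μ.toJordanDecomposition.posPart - ∫ x, f x ∂μ.toJordanDecomposition.negPart

/-- The norm of the restriction of (the functional induced by) a signed measure `μ` to
a subspace `Y ⊆ C[0,1]`, i.e. `sup {|μ(y)| : y ∈ Y, ‖y‖ ≤ 1}`. -/
noncomputable def smRestNorm (μ : SignedMeasure I01) (Y : Submodule ℝ C01) : ℝ :=
  sSup {r : ℝ | ∃ y ∈ Y, ‖y‖ ≤ 1 ∧ r = |smInt μ y|}

/-!
Since `c₀` has separable dual, so does `Y`. Hence `x ↦ (δ_x|_Y, f x)`, although only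
weak*-continuous, takes its values in a norm-separable space whose closed balls have closed
preimages, so up to a small norm error it factors through a measurable `φ : [0,1] → [0,1]` with
countable range, which can be chosen among the points that are not atoms of `x*`.
Take for `v*` the push-forward of `e*` under `φ`: it is close to `e*` on `Y` and at `f`, and it is
carried by a countable `x*`-null set. So `x*` and `v*` are mutually singular, and
`‖x* + v*‖ = ‖x*‖ + ‖v*‖ ≥ ‖x*‖ + v*(f)`.
-/

open Filter Metric Set TopologicalSpace VectorMeasure
open scoped ZeroAtInfty

section DualSeparability

variable {ι 𝕜 E F : Type*} [RCLike 𝕜] [NormedAddCommGroup E] [NormedSpace 𝕜 E]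
  [NormedAddCommGroup F] [NormedSpace 𝕜 F]

lemma sum_norm_apply_le {e : ι → E} {C : ℝ}
    (he : ∀ (s : Finset ι) (c : ι → 𝕜), (∀ i, ‖c i‖ ≤ 1) → ‖∑ i ∈ s, c i • e i‖ ≤ C)
    (φ : StrongDual 𝕜 E) (s : Finset ι) : ∑ i ∈ s, ‖φ (e i)‖ ≤ ‖φ‖ * C := by
  choose c hc_norm hc_mul using fun i ↦ RCLike.exists_norm_eq_mul_self (φ (e i))
  have hsum : ((∑ i ∈ s, ‖φ (e i)‖ : ℝ) : 𝕜) = φ (∑ i ∈ s, c i • e i) := by simp [hc_mul]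
  calc ∑ i ∈ s, ‖φ (e i)‖ = ‖φ (∑ i ∈ s, c i • e i)‖ := by
        rw [← hsum, RCLike.norm_of_nonneg (Finset.sum_nonneg fun _ _ ↦ norm_nonneg _)]
    _ ≤ ‖φ‖ * C := φ.le_opNorm_of_le (he s c fun i ↦ (hc_norm i).le)

lemma hasSum_dual_of_bounded_sum_smul {e : ι → E} {e' : ι → StrongDual 𝕜 E} {C D : ℝ}
    (he : ∀ (s : Finset ι) (c : ι → 𝕜), (∀ i, ‖c i‖ ≤ 1) → ‖∑ i ∈ s, c i • e i‖ ≤ C)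
    (he' : ∀ i, ‖e' i‖ ≤ D) (hsum : ∀ x, HasSum (fun i ↦ e' i x • e i) x)
    (φ : StrongDual 𝕜 E) : HasSum (fun i ↦ φ (e i) • e' i) φ := by
  have hφe : Summable fun i ↦ ‖φ (e i)‖ :=
    summable_of_sum_le (fun _ ↦ norm_nonneg _) (sum_norm_apply_le he φ)
  have hφe' : Summable fun i ↦ φ (e i) • e' i :=
    (hφe.mul_right D).of_norm_bounded fun i ↦ by
      rw [norm_smul]
      exact mul_le_mul_of_nonneg_left (he' i) (norm_nonneg _)
  convert hφe'.hasSum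
  ext x
  refine ((hsum x).mapL φ).unique ?_
  simpa [mul_comm] using hφe'.hasSum.mapL (ContinuousLinearMap.apply 𝕜 𝕜 x)

lemma separableSpace_dual_of_bounded_sum_smul [Countable ι] {e : ι → E} {e' : ι → StrongDual 𝕜 E}
    {C D : ℝ}
    (he : ∀ (s : Finset ι) (c : ι → 𝕜), (∀ i, ‖c i‖ ≤ 1) → ‖∑ i ∈ s, c i • e i‖ ≤ C)
    (he' : ∀ i, ‖e' i‖ ≤ D) (hsum : ∀ x, HasSum (fun i ↦ e' i x • e i) x) :
    SeparableSpace (StrongDual 𝕜 E) := by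
  let V := Submodule.span 𝕜 (range e')
  have hV : closure (V : Set (StrongDual 𝕜 E)) = univ := eq_univ_of_forall fun φ ↦
    mem_closure_of_tendsto (hasSum_dual_of_bounded_sum_smul he he' hsum φ) <| .of_forall fun s ↦
      V.sum_mem fun i _ ↦ V.smul_mem _ (Submodule.subset_span (mem_range_self i))
  rw [← isSeparable_univ_iff, ← hV]
  exact ((countable_range e').isSeparable.span (R := 𝕜)).closure

lemma separableSpace_dual_of_continuousLinearEquiv [SeparableSpace (StrongDual 𝕜 F)]
    (T : E ≃L[𝕜] F) : SeparableSpace (StrongDual 𝕜 E) :=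
  let T' : StrongDual 𝕜 F ≃L[𝕜] StrongDual 𝕜 E := T.symm.arrowCongr (.refl 𝕜 𝕜)
  T'.surjective.denseRange.separableSpace T'.continuous

end DualSeparability

section ZeroAtInfty

variable {α 𝕜 : Type*} [TopologicalSpace α] [RCLike 𝕜]

lemma norm_zeroAtInfty_le {β : Type*} [SeminormedAddCommGroup β]
    (x : C₀(α, β)) {C : ℝ} (hC : 0 ≤ C) (h : ∀ i, ‖x i‖ ≤ C) : ‖x‖ ≤ C := by
  rw [← ZeroAtInftyContinuousMap.norm_toBCF_eq_norm]
  exact (BoundedContinuousFunction.norm_le hC).2 h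

/-- Evaluation at a point, as a continuous linear functional on `C₀(α, 𝕜)`. -/
noncomputable def zeroAtInftyEval (𝕜 : Type*) [RCLike 𝕜] (i : α) : StrongDual 𝕜 C₀(α, 𝕜) :=
  LinearMap.mkContinuous
    { toFun := fun x ↦ x i, map_add' := fun _ _ ↦ rfl, map_smul' := fun _ _ ↦ rfl } 1 fun x ↦ by
      simpa [ZeroAtInftyContinuousMap.norm_toBCF_eq_norm] using x.toBCF.norm_coe_le_norm i

variable [DiscreteTopology α]

open Classical in
/-- The `i`-th unit vector of `c₀(α)`. -/
noncomputable def zeroAtInftySingle (𝕜 : Type*) [RCLike 𝕜] (i : α) : C₀(α, 𝕜) where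
  toFun j := if j = i then 1 else 0
  continuous_toFun := continuous_of_discreteTopology
  zero_at_infty' := by
    rw [cocompact_eq_cofinite]
    refine tendsto_const_nhds.congr' ?_
    filter_upwards [(finite_singleton i).compl_mem_cofinite] with j hj
    exact (if_neg hj).symm

open Classical in
lemma sum_smul_zeroAtInftySingle_apply (s : Finset α) (a : α → 𝕜) (j : α) :
    (∑ i ∈ s, a i • zeroAtInftySingle 𝕜 i) j = if j ∈ s then a j else 0 := by
  calc (∑ i ∈ s, a i • zeroAtInftySingle 𝕜 i) j
      = ∑ i ∈ s, (a i • zeroAtInftySingle 𝕜 i) j :=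
        map_sum (zeroAtInftyEval 𝕜 j) _ s
    _ = ∑ i ∈ s, if j = i then a i else 0 :=
        Finset.sum_congr rfl fun i _ ↦ mul_ite_zero (j = i) (a i) 1 |>.trans (by rw [mul_one])
    _ = _ := Finset.sum_ite_eq s j a

lemma norm_sum_smul_zeroAtInftySingle_le (s : Finset α) (c : α → 𝕜) (hc : ∀ i, ‖c i‖ ≤ 1) :
    ‖∑ i ∈ s, c i • zeroAtInftySingle 𝕜 i‖ ≤ 1 := by
  refine norm_zeroAtInfty_le _ zero_le_one fun j ↦ ?_
  rw [sum_smul_zeroAtInftySingle_apply]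
  split_ifs <;> simp [hc]

lemma hasSum_smul_zeroAtInftySingle (x : C₀(α, 𝕜)) :
    HasSum (fun i ↦ x i • zeroAtInftySingle 𝕜 i) x := by
  classical
  rw [HasSum, SummationFilter.unconditional_filter, Metric.tendsto_atTop]
  intro ε hε
  have hfin : {i | ε / 2 ≤ ‖x i‖}.Finite := by
    have := x.zero_at_infty'.eventually (ball_mem_nhds 0 (half_pos hε))
    rw [cocompact_eq_cofinite] at this
    simpa using this
  refine ⟨hfin.toFinset, fun s hs ↦ ?_⟩
  rw [dist_eq_norm]
  refine (norm_zeroAtInfty_le _ (half_pos hε).le fun j ↦ ?_).trans_lt (half_lt_self hε)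
  rw [ZeroAtInftyContinuousMap.sub_apply, sum_smul_zeroAtInftySingle_apply]
  split_ifs with hj
  · simpa using (half_pos hε).le
  · have : ‖x j‖ < ε / 2 := not_le.1 fun h ↦ hj (hs (hfin.mem_toFinset.2 h))
    simpa using this.le

instance separableSpace_dual_zeroAtInfty [Countable α] :
    SeparableSpace (StrongDual 𝕜 C₀(α, 𝕜)) :=
  separableSpace_dual_of_bounded_sum_smul (e' := zeroAtInftyEval 𝕜)
    norm_sum_smul_zeroAtInftySingle_le (fun _ ↦ LinearMap.mkContinuous_norm_le _ zero_le_one _)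
    hasSum_smul_zeroAtInftySingle

end ZeroAtInfty

section WeakStarSelection

lemma isClosed_preimage_closedBall {X 𝕜 E : Type*} [TopologicalSpace X]
    [NontriviallyNormedField 𝕜] [ProperSpace 𝕜] [NormedAddCommGroup E] [NormedSpace 𝕜 E]
    {G : X → StrongDual 𝕜 E}
    (hG : ∀ y, Continuous fun x ↦ G x y) (φ : StrongDual 𝕜 E) (r : ℝ) :
    IsClosed (G ⁻¹' closedBall φ r) :=
  (WeakDual.isClosed_closedBall φ r).preimage
    (f := fun x ↦ StrongDual.toWeakDual (G x)) (WeakDual.continuous_of_continuous_eval hG)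

lemma exists_measurable_countable_approx {X Z : Type*} [MeasurableSpace X] [PseudoMetricSpace Z]
    [SeparableSpace Z] {G : X → Z} {δ : ℝ} (hδ : 0 < δ)
    (hG : ∀ z r, MeasurableSet (G ⁻¹' closedBall z r)) (S : Set X) :
    ∃ φ : X → X, Measurable φ ∧ (φ '' S).Countable ∧ MapsTo φ S S ∧
      ∀ x ∈ S, dist (G x) (G (φ x)) ≤ δ := by
  classical
  obtain rfl | ⟨x₀, hx₀⟩ := S.eq_empty_or_nonempty
  · exact ⟨id, measurable_id, by simp, mapsTo_id _, by simp⟩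
  have : Nonempty Z := ⟨G x₀⟩
  have hcover x : ∃ n, x ∈ G ⁻¹' closedBall (denseSeq Z n) (δ / 2) := by
    obtain ⟨n, hn⟩ := (denseRange_denseSeq Z).exists_dist_lt (G x) (half_pos hδ)
    exact ⟨n, hn.le⟩
  have hcenter n : ∃ p ∈ S, (S ∩ G ⁻¹' closedBall (denseSeq Z n) (δ / 2)).Nonempty →
      G p ∈ closedBall (denseSeq Z n) (δ / 2) := by
    by_cases h : (S ∩ G ⁻¹' closedBall (denseSeq Z n) (δ / 2)).Nonempty
    · exact ⟨h.some, h.some_mem.1, fun _ ↦ h.some_mem.2⟩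
    · exact ⟨x₀, hx₀, fun h' ↦ absurd h' h⟩
  choose p hpS hp using hcenter
  refine ⟨fun x ↦ p (Nat.find (hcover x)),
    (measurable_from_nat (f := p)).comp (measurable_find hcover fun n ↦ hG _ _),
    (countable_range p).mono (image_subset_iff.2 fun x _ ↦ mem_range_self _),
    fun x _ ↦ hpS _, fun x hx ↦ ?_⟩
  have hx_ball := Nat.find_spec (hcover x)
  calc dist (G x) (G (p (Nat.find (hcover x)))) ≤ δ / 2 + δ / 2 :=
        (dist_triangle_right _ _ _).trans (add_le_add hx_ball (hp _ ⟨x, hx, hx_ball⟩))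
    _ = δ := add_halves δ

lemma exists_measurable_countable_near {X E : Type*} [TopologicalSpace X] [MeasurableSpace X]
    [OpensMeasurableSpace X] [NormedAddCommGroup E] [NormedSpace ℝ E]
    [SeparableSpace (StrongDual ℝ E)] (J : E →L[ℝ] C(X, ℝ)) (f : C(X, ℝ)) (S : Set X)
    {δ : ℝ} (hδ : 0 < δ) :
    ∃ φ : X → X, Measurable φ ∧ (φ '' S).Countable ∧ MapsTo φ S S ∧
      ∀ x ∈ S, |f x - f (φ x)| ≤ δ ∧ ∀ y, |J y x - J y (φ x)| ≤ δ * ‖y‖ := by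
  let D (x : X) : StrongDual ℝ E := (ContinuousMap.evalCLM ℝ x).comp J
  have hD (z : StrongDual ℝ E × ℝ) (r : ℝ) :
      MeasurableSet ((fun x ↦ (D x, f x)) ⁻¹' closedBall z r) := by
    rw [← closedBall_prod_same, mk_preimage_prod]
    have hDz : IsClosed (D ⁻¹' closedBall z.1 r) :=
      isClosed_preimage_closedBall (fun y ↦ (J y).continuous) z.1 r
    exact (hDz.inter (isClosed_closedBall.preimage f.continuous)).measurableSet
  obtain ⟨φ, hφ, hcount, hφS, hdist⟩ := exists_measurable_countable_approx hδ hD S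
  refine ⟨φ, hφ, hcount, hφS, fun x hx ↦ ?_⟩
  obtain ⟨hDx, hfx⟩ := max_le_iff.1 (Prod.dist_eq.symm.trans_le (hdist x hx))
  rw [dist_eq_norm] at hDx
  exact ⟨hfx, (D x - D (φ x)).le_of_opNorm_le hDx⟩

end WeakStarSelection

section VectorMeasure

variable {X Y V : Type*} {mX : MeasurableSpace X} {mY : MeasurableSpace Y}

lemma restrict_eq_zero_of_variation_eq_zero [TopologicalSpace V] [ENormedAddCommMonoid V]
    [T2Space V] {μ : VectorMeasure X V} {s : Set X} (hs : MeasurableSet s)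
    (h : μ.variation s = 0) : μ.restrict s = 0 := by
  rwa [← variation_eq_zero, variation_restrict hs, Measure.restrict_eq_zero]

lemma restrict_eq_self_of_variation_compl_eq_zero [NormedAddCommGroup V] {μ : VectorMeasure X V}
    {s : Set X} (hs : MeasurableSet s) (h : μ.variation sᶜ = 0) : μ.restrict s = μ := by
  simpa [restrict_eq_zero_of_variation_eq_zero hs.compl h] using
    restrict_add_restrict_compl hs (v := μ)

lemma variation_add_of_mutuallySingular [NormedAddCommGroup V]
    {μ ν : VectorMeasure X V} (h : μ.variation ⟂ₘ ν.variation) :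
    (μ + ν).variation = μ.variation + ν.variation := by
  obtain ⟨s, hs, hμs, hνs⟩ := h
  have hμ : μ.restrict sᶜ = μ :=
    restrict_eq_self_of_variation_compl_eq_zero hs.compl (by rwa [compl_compl])
  have hν : ν.restrict s = ν := restrict_eq_self_of_variation_compl_eq_zero hs hνs
  calc (μ + ν).variation
      = ((μ + ν).restrict sᶜ).variation + ((μ + ν).restrict s).variation := by
        rw [variation_restrict hs, variation_restrict hs.compl,
          Measure.restrict_compl_add_restrict hs]
    _ = μ.variation + ν.variation := by
        rw [restrict_add, restrict_add, hμ, hν, restrict_eq_zero_of_variation_eq_zero hs hμs,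
          restrict_eq_zero_of_variation_eq_zero hs.compl hνs, add_zero, zero_add]

lemma variation_singleton_eq_zero_iff [TopologicalSpace V] [ENormedAddCommMonoid V]
    [T2Space V] [MeasurableSingletonClass X] {μ : VectorMeasure X V} {x : X} :
    μ.variation {x} = 0 ↔ μ {x} = 0 := by
  rw [variation_apply_eq_zero (measurableSet_singleton x)]
  refine ⟨fun h ↦ h _ Subset.rfl (measurableSet_singleton x), fun h t ht _ ↦ ?_⟩
  obtain rfl | rfl := subset_singleton_iff_eq.1 ht
  exacts [μ.empty, h]

lemma mutuallySingular_map_of_countable_image [MeasurableSingletonClass Y] {μ : Measure X}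
    {ν : Measure Y} {φ : X → Y} (hφ : Measurable φ) {S : Set X} (hS : μ Sᶜ = 0)
    (hcount : (φ '' S).Countable) (hν : ∀ x ∈ S, ν {φ x} = 0) : μ.map φ ⟂ₘ ν := by
  refine ⟨(φ '' S)ᶜ, hcount.measurableSet.compl, ?_, ?_⟩
  · rw [Measure.map_apply hφ hcount.measurableSet.compl]
    exact measure_mono_null (fun x hx hxS ↦ hx (mem_image_of_mem φ hxS)) hS
  · rw [compl_compl, measure_null_iff_singleton hcount]
    exact forall_mem_image.2 hν

lemma measure_setOf_singleton_ne_zero_eq_zero [MeasurableSingletonClass X]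
    {μ ν : Measure X} [SFinite ν] (h : ∀ x, μ {x} = 0 ∨ ν {x} = 0) : μ {x | ν {x} ≠ 0} = 0 := by
  have hcount : {x | ν {x} ≠ 0}.Countable := by
    simpa [pos_iff_ne_zero] using Measure.countable_meas_level_set_pos (μ := ν) measurable_id
  rw [measure_null_iff_singleton hcount]
  exact fun x hx ↦ (h x).resolve_right hx

instance isFiniteMeasure_variation (μ : SignedMeasure X) : IsFiniteMeasure μ.variation := by
  rw [← SignedMeasure.totalVariation_eq_variation, SignedMeasure.totalVariation]
  infer_instance

lemma variation_real_map_univ_le [NormedAddCommGroup V] (μ : VectorMeasure X V)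
    [IsFiniteMeasure μ.variation] {φ : X → Y} (hφ : Measurable φ) :
    (μ.map φ).variation.real univ ≤ μ.variation.real univ :=
  calc (μ.map φ).variation.real univ ≤ (μ.variation.map φ).real univ :=
        ENNReal.toReal_mono (by finiteness) (variation_map_le univ)
    _ = μ.variation.real univ := by rw [map_measureReal_apply hφ .univ, preimage_univ]

lemma norm_integral_sub_integral_map_le {E F G : Type*} [NormedAddCommGroup E] [NormedSpace ℝ E]
    [NormedAddCommGroup F] [NormedSpace ℝ F] [NormedAddCommGroup G] [NormedSpace ℝ G]
    {μ : VectorMeasure X F}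
    [IsFiniteMeasure μ.variation] (B : E →L[ℝ] F →L[ℝ] G) {φ : X → X} (hφ : Measurable φ)
    {f : X → E} (hf : μ.Integrable f) (hfm : AEStronglyMeasurable f (μ.variation.map φ))
    {C : ℝ} (hC : ∀ᵐ x ∂μ.variation, ‖f x - f (φ x)‖ ≤ C) :
    ‖∫ᵛ x, f x ∂[B; μ] - ∫ᵛ x, f x ∂[B; μ.map φ]‖ ≤ C * ‖B‖ * μ.variation.real univ := by
  have hsub : μ.Integrable fun x ↦ f x - f (φ x) :=
    .of_bound (hf.aestronglyMeasurable.sub (hfm.comp_measurable hφ)) C hC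
  have hfφ : μ.Integrable fun x ↦ f (φ x) := by simpa using hf.fun_sub hsub
  rw [integral_map hφ hfm hfφ, ← integral_fun_sub hf hfφ]
  exact norm_integral_le_of_norm_le_const hC

end VectorMeasure

section CompactSpace

variable {X : Type*} [TopologicalSpace X] [CompactSpace X] [MeasurableSpace X]

lemma abs_integral_signedMeasure_le (μ : SignedMeasure X) (f : C(X, ℝ)) :
    |∫ᵛ x, f x ∂<•μ| ≤ ‖f‖ * μ.variation.real univ := by
  simpa using norm_integral_le_of_norm_le_const (μ := μ)
    (B := (ContinuousLinearMap.lsmul ℝ ℝ).flip) (.of_forall f.norm_coe_le_norm)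

variable [OpensMeasurableSpace X]

lemma integrable_continuousMap (μ : Measure X) [IsFiniteMeasure μ] (f : C(X, ℝ)) :
    Integrable f μ :=
  .of_bound f.continuous.aestronglyMeasurable ‖f‖ (.of_forall f.norm_coe_le_norm)

lemma integral_signedMeasure_eq_sub (μ : SignedMeasure X) (f : C(X, ℝ)) :
    ∫ᵛ x, f x ∂<•μ =
      ∫ x, f x ∂μ.toJordanDecomposition.posPart - ∫ x, f x ∂μ.toJordanDecomposition.negPart := by
  conv_lhs => rw [← μ.toSignedMeasure_toJordanDecomposition, JordanDecomposition.toSignedMeasure]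
  rw [integral_sub_vectorMeasure (integrable_continuousMap _ f) (integrable_continuousMap _ f),
    integral_toSignedMeasure, integral_toSignedMeasure]

lemma abs_integral_sub_integral_map_le (μ : SignedMeasure X) {φ : X → X} (hφ : Measurable φ)
    (f : C(X, ℝ)) {C : ℝ} (hC : ∀ᵐ x ∂μ.variation, |f x - f (φ x)| ≤ C) :
    |∫ᵛ x, f x ∂<•μ - ∫ᵛ x, f x ∂<•(μ.map φ)| ≤ C * μ.variation.real univ := by
  simpa using norm_integral_sub_integral_map_le (ContinuousLinearMap.lsmul ℝ ℝ).flip hφ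
    (integrable_continuousMap μ.variation f) f.continuous.aestronglyMeasurable hC

end CompactSpace

lemma smNorm_eq (μ : SignedMeasure I01) : smNorm μ = μ.variation.real univ := by
  rw [smNorm, SignedMeasure.totalVariation_eq_variation, Measure.real]

lemma smInt_eq (μ : SignedMeasure I01) (f : C01) : smInt μ f = ∫ᵛ x, f x ∂<•μ :=
  (integral_signedMeasure_eq_sub μ f).symm

lemma smRestNorm_le {μ : SignedMeasure I01} {Y : Submodule ℝ C01} {C : ℝ} (hC : 0 ≤ C)
    (h : ∀ y ∈ Y, |∫ᵛ x, y x ∂<•μ| ≤ C * ‖y‖) : smRestNorm μ Y ≤ C := by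
  refine Real.sSup_le ?_ hC
  rintro _ ⟨y, hyY, hy, rfl⟩
  rw [smInt_eq]
  exact (h y hyY).trans (mul_le_of_le_one_right hC hy)

theorem c0_subspace_narrowness_general {X : Type*} [TopologicalSpace X] [CompactSpace X]
    [MeasurableSpace X] [OpensMeasurableSpace X] [MeasurableSingletonClass X]
    {E : Type*} [NormedAddCommGroup E] [NormedSpace ℝ E]
    [SeparableSpace (StrongDual ℝ E)] (J : E →L[ℝ] C(X, ℝ))
    (xs es : SignedMeasure X) (hes : es.variation.real univ ≤ 1)
    (hatoms : ∀ t, es {t} = 0 ∨ xs {t} = 0) {ε δ : ℝ} (hδ : 0 < δ)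
    (f : C(X, ℝ)) (hf : ‖f‖ ≤ 1) (hef : 1 - ε < ∫ᵛ x, f x ∂<•es) :
    ∃ v : SignedMeasure X, v.variation.real univ ≤ 1 ∧ 1 - ε < ∫ᵛ x, f x ∂<•v ∧
      xs.variation.real univ + (1 - ε) < (xs + v).variation.real univ ∧
      ∀ y, |∫ᵛ x, J y x ∂<•(es - v)| ≤ δ * ‖y‖ := by
  let S : Set X := {t | xs.variation {t} = 0}
  obtain ⟨r, hr, hr_lt⟩ := exists_between (lt_min hδ (sub_pos.2 hef))
  obtain ⟨hrδ, hrf⟩ := lt_min_iff.1 hr_lt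
  obtain ⟨φ, hφ, hcount, hφS, hnear⟩ := exists_measurable_countable_near J f S hr
  have hS : es.variation Sᶜ = 0 := measure_setOf_singleton_ne_zero_eq_zero fun t ↦ by
    simpa only [variation_singleton_eq_zero_iff] using hatoms t
  have hint {g : C(X, ℝ)} {C : ℝ} (hC : 0 ≤ C) (hg : ∀ x ∈ S, |g x - g (φ x)| ≤ C) :
      |∫ᵛ x, g x ∂<•es - ∫ᵛ x, g x ∂<•(es.map φ)| ≤ C :=
    (abs_integral_sub_integral_map_le es hφ g <|
      mem_ae_iff.2 (measure_mono_null (compl_subset_compl.2 hg) hS)).trans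
      (mul_le_of_le_one_right hC hes)
  have hv : (es.map φ).variation.real univ ≤ 1 := (variation_real_map_univ_le es hφ).trans hes
  have hvf : 1 - ε < ∫ᵛ x, f x ∂<•(es.map φ) := by
    linarith [(abs_le.1 (hint hr.le fun x hx ↦ (hnear x hx).1)).2]
  refine ⟨es.map φ, hv, hvf, ?_, fun y ↦ ?_⟩
  · have hsing : xs.variation ⟂ₘ (es.map φ).variation :=
      ((mutuallySingular_map_of_countable_image hφ hS hcount hφS).mono variation_map_le le_rfl).symm
    rw [variation_add_of_mutuallySingular hsing, measureReal_add_apply]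
    have hfv : ∫ᵛ x, f x ∂<•(es.map φ) ≤ (es.map φ).variation.real univ :=
      (le_abs_self _).trans <| (abs_integral_signedMeasure_le _ f).trans <|
        mul_le_of_le_one_left measureReal_nonneg hf
    gcongr
    exact hvf.trans_le hfv
  · rw [integral_sub_vectorMeasure (integrable_continuousMap _ (J y))
      (integrable_continuousMap _ (J y))]
    exact (hint (by positivity) fun x hx ↦ (hnear x hx).2 y).trans (by gcongr)

/-- Let `Y ⊆ C[0,1]` be a closed subspace isomorphic to `c₀`. Then for all norm-one
`x*, e* ∈ M[0,1]` with `e*` atomless, every `ε > 0` and every norm-one `f ∈ C[0,1]`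
with `e*(f) > 1 - ε`, there is `v*` in the closed unit ball of `M[0,1]` with
`v*(f) > 1 - ε`, `‖x* + v*‖ > 2 - ε` and `‖(e* - v*)|_Y‖ < ε`. -/
theorem c0_subspace_narrowness
    (Y : Submodule ℝ C01) (hYc : IsClosed (Y : Set C01))
    (hYiso : Nonempty (↥Y ≃L[ℝ] c0))
    (xs es : SignedMeasure I01) (hxs : smNorm xs = 1) (hes : smNorm es = 1)
    (hatomless : ∀ t : I01, es {t} = 0)
    (ε : ℝ) (hε : 0 < ε)
    (f : C01) (hf : ‖f‖ = 1) (hef : smInt es f > 1 - ε) :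
    ∃ v : SignedMeasure I01, smNorm v ≤ 1 ∧
      smInt v f > 1 - ε ∧ smNorm (xs + v) > 2 - ε ∧ smRestNorm (es - v) Y < ε := by
  have := separableSpace_dual_of_continuousLinearEquiv (𝕜 := ℝ) (E := Y) (F := c0) hYiso.some
  simp only [smNorm_eq, smInt_eq] at hxs hes hef ⊢
  obtain ⟨v, hv, hvf, hxv, hvY⟩ := c0_subspace_narrowness_general (E := Y) Y.subtypeL xs es
    hes.le (fun t ↦ .inl (hatomless t)) (half_pos hε) f hf.le hef
  have hvY' : smRestNorm (es - v) Y ≤ ε / 2 :=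
    smRestNorm_le (half_pos hε).le fun y hy ↦ hvY ⟨y, hy⟩
  exact ⟨v, hv, hvf, by linarith, hvY'.trans_lt (half_lt_self hε)⟩
end

section
/- Let Z be a closed subspace of L¹[0,1] that contains no subspace isomorphic (linearly homeomorphic) to ℓ¹. Then Z is reflexive, and the quotient space L¹[0,1]/Z has the Daugavet property. -/
open MeasureTheory

/-- Lebesgue measure restricted to `[0,1]`. -/
noncomputable def mu01 : Measure ℝ := volume.restrict (Set.Icc 0 1)

/-- The Banach space `L¹[0,1]` of Lebesgue integrable functions on `[0,1]`. -/
noncomputable abbrev L1 : Type := Lp ℝ 1 mu01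

/-- The Banach space `ℓ¹` of absolutely summable real sequences. -/
abbrev ell1 : Type := lp (fun _ : ℕ => ℝ) 1

/-- A normed space `X` has the Daugavet property if `‖Id + T‖ = 1 + ‖T‖` for every
rank-one bounded linear operator `T : X → X`. -/
def DaugavetProperty (X : Type*) [SeminormedAddCommGroup X] [NormedSpace ℝ X] : Prop :=
  ∀ (f : X →L[ℝ] ℝ) (x : X),
    ‖ContinuousLinearMap.id ℝ X + f.smulRight x‖ = 1 + ‖f.smulRight x‖

/-!
Let `η` be the infimum of the `t` such that every unit vector of `Z` has mass at most `t` on every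
set of small enough measure. If `η > 0`, a gliding hump yields unit vectors of `Z` with mass almost
`η` on pairwise disjoint sets, and, by the choice of `η`, mass barely more than `η` on the small
union of these sets. The interaction between different vectors is therefore negligible, and they
span a copy of `ℓ¹`. So `η = 0`: the unit ball of `Z` is equi-integrable.

Truncation then brings this ball within any `ε > 0` of a multiple of the ball of `L²`. As `L²` is
reflexive, Hahn-Banach shows that each functional on `Z*` is, in the bidual of `L¹`, a limit of
points of `L¹`, hence a point of `L¹`; it annihilates the functionals vanishing on `Z`, so it lies
in `Z`.

For the Daugavet property, every functional on `L¹` is almost normed by functions supported on sets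
of small measure. By equi-integrability the representatives of bounded norm of a given coset have
little mass there, so the quotient norm is almost additive between such a function and the coset.
-/

section LocalNorm

variable {α E : Type*} [MeasurableSpace α] {μ : Measure α} [NormedAddCommGroup E]
  {A B : Set α}

/-- The product of the indicator of `A` with `h`, as an element of `L¹(μ; E)`. -/
noncomputable def indicatorL1 (hA : MeasurableSet A) (h : Lp E 1 μ) : Lp E 1 μ :=
  ((Lp.memLp h).indicator hA).toLp _

lemma coeFn_indicatorL1 (hA : MeasurableSet A) (h : Lp E 1 μ) :
    indicatorL1 hA h =ᵐ[μ] A.indicator h :=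
  MemLp.coeFn_toLp _

lemma indicatorL1_union (hA : MeasurableSet A) (hB : MeasurableSet B) (hAB : Disjoint A B)
    (h : Lp E 1 μ) : indicatorL1 (hA.union hB) h = indicatorL1 hA h + indicatorL1 hB h := by
  simp only [indicatorL1, Set.indicator_union_of_disjoint hAB]
  exact MemLp.toLp_add _ _

lemma indicatorL1_add_indicatorL1_compl (hA : MeasurableSet A) (h : Lp E 1 μ) :
    indicatorL1 hA h + indicatorL1 hA.compl h = h := by
  rw [← indicatorL1_union hA hA.compl disjoint_compl_right]
  simp only [indicatorL1, Set.union_compl_self, Set.indicator_univ]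
  exact Lp.toLp_coeFn h (Lp.memLp h)

variable [NormedSpace ℝ E]

/-- The seminorm `h ↦ ∫ x in A, ‖h x‖ ∂μ` on `L¹(μ; E)`, encoded as the norm of the restriction
of `h` to `A`. -/
noncomputable def normOn (μ : Measure α) (A : Set α) : Seminorm ℝ (Lp E 1 μ) :=
  (normSeminorm ℝ (Lp E 1 (μ.restrict A))).comp (LpToLpRestrictCLM α E ℝ μ 1 A).toLinearMap

lemma normOn_apply (A : Set α) (h : Lp E 1 μ) : normOn μ A h = ∫ x in A, ‖h x‖ ∂μ := by
  have h_restrict : normOn μ A h = ‖LpToLpRestrictCLM α E ℝ μ 1 A h‖ := rfl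
  rw [h_restrict, L1.norm_eq_integral_norm]
  exact integral_congr_ae ((LpToLpRestrictCLM_coeFn ℝ A h).fun_comp norm)

lemma normOn_mono (hAB : A ⊆ B) (h : Lp E 1 μ) : normOn μ A h ≤ normOn μ B h := by
  rw [normOn_apply, normOn_apply]
  exact setIntegral_mono_set (L1.integrable_coeFn h).norm.integrableOn
    (.of_forall fun x ↦ norm_nonneg _) hAB.eventuallyLE

lemma normOn_le_norm (A : Set α) (h : Lp E 1 μ) : normOn μ A h ≤ ‖h‖ := by
  rw [normOn_apply, L1.norm_eq_integral_norm]
  exact setIntegral_le_integral (L1.integrable_coeFn h).norm (.of_forall fun x ↦ norm_nonneg _)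

lemma normOn_add_normOn_compl (hA : MeasurableSet A) (h : Lp E 1 μ) :
    normOn μ A h + normOn μ Aᶜ h = ‖h‖ := by
  rw [normOn_apply, normOn_apply, L1.norm_eq_integral_norm]
  exact integral_add_compl hA (L1.integrable_coeFn h).norm

lemma normOn_le_normOn_diff_add (A : Set α) (hB : MeasurableSet B) (h : Lp E 1 μ) :
    normOn μ A h ≤ normOn μ (A \ B) h + normOn μ B h := by
  have h_union : normOn μ (A \ B ∪ B) h = normOn μ (A \ B) h + normOn μ B h := by
    simp only [normOn_apply]
    exact setIntegral_union Set.disjoint_sdiff_left hB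
      (L1.integrable_coeFn h).norm.integrableOn (L1.integrable_coeFn h).norm.integrableOn
  rw [← h_union, Set.sdiff_union_self]
  exact normOn_mono Set.subset_union_left h

lemma sum_normOn_eq {ι : Type*} (s : Finset ι) {B : ι → Set α} (hB : ∀ i, MeasurableSet (B i))
    (hdisj : Pairwise (Function.onFun Disjoint B)) (h : Lp E 1 μ) :
    ∑ i ∈ s, normOn μ (B i) h = normOn μ (⋃ i ∈ s, B i) h := by
  simp only [normOn_apply]
  exact (integral_biUnion_finset s (fun i _ ↦ hB i) (hdisj.set_pairwise _)
    fun i _ ↦ (L1.integrable_coeFn h).norm.integrableOn).symm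

lemma tendsto_normOn_zero {ι : Type*} {l : Filter ι} {s : ι → Set α}
    (hs : Filter.Tendsto (μ ∘ s) l (nhds 0)) (h : Lp E 1 μ) :
    Filter.Tendsto (fun i ↦ normOn μ (s i) h) l (nhds 0) := by
  simp only [normOn_apply]
  exact (L1.integrable_coeFn h).norm.tendsto_setIntegral_nhds_zero hs

lemma hasSum_normOn {B : ℕ → Set α} (hB : ∀ n, MeasurableSet (B n))
    (hdisj : Pairwise (Function.onFun Disjoint B)) (hcover : ⋃ n, B n = Set.univ) (h : Lp E 1 μ) :
    HasSum (fun n ↦ normOn μ (B n) h) ‖h‖ := by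
  simp only [normOn_apply, L1.norm_eq_integral_norm]
  simpa only [hcover, setIntegral_univ] using
    hasSum_integral_iUnion hB hdisj (L1.integrable_coeFn h).norm.integrableOn

lemma normOn_indicatorL1 (hA : MeasurableSet A) (B : Set α) (h : Lp E 1 μ) :
    normOn μ B (indicatorL1 hA h) = normOn μ (B ∩ A) h := by
  rw [normOn_apply, normOn_apply, ← setIntegral_indicator hA]
  refine integral_congr_ae (ae_restrict_of_ae ?_)
  filter_upwards [coeFn_indicatorL1 hA h] with x hx
  rw [hx, norm_indicator_eq_indicator_norm]

lemma norm_indicatorL1 (hA : MeasurableSet A) (h : Lp E 1 μ) :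
    ‖indicatorL1 hA h‖ = normOn μ A h := by
  rw [← normOn_add_normOn_compl hA, normOn_indicatorL1, normOn_indicatorL1]
  simp [normOn_apply]

lemma norm_sub_indicatorL1 (hA : MeasurableSet A) (h : Lp E 1 μ) :
    ‖h - indicatorL1 hA h‖ = normOn μ Aᶜ h := by
  rw [sub_eq_of_eq_add' (indicatorL1_add_indicatorL1_compl hA h).symm, norm_indicatorL1]

lemma sum_indicatorL1 {ι : Type*} (s : Finset ι) {B : ι → Set α} (hB : ∀ i, MeasurableSet (B i))
    (hdisj : Pairwise (Function.onFun Disjoint B)) (h : Lp E 1 μ) :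
    ∑ i ∈ s, indicatorL1 (hB i) h
      = indicatorL1 (s.measurableSet_biUnion fun i _ ↦ hB i) h := by
  classical
  induction s using Finset.induction_on with
  | empty =>
    refine (norm_eq_zero.1 ?_).symm
    simp [norm_indicatorL1, normOn_apply]
  | insert i s hi ih =>
    have hdisj_s : Disjoint (B i) (⋃ j ∈ s, B j) :=
      Set.disjoint_iUnion₂_right.2 fun j hj ↦ hdisj (ne_of_mem_of_not_mem hj hi).symm
    rw [Finset.sum_insert hi, ih, ← indicatorL1_union _ _ hdisj_s]
    simp only [Finset.set_biUnion_insert]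

lemma hasSum_indicatorL1 {B : ℕ → Set α} (hB : ∀ n, MeasurableSet (B n))
    (hdisj : Pairwise (Function.onFun Disjoint B)) (hcover : ⋃ n, B n = Set.univ) (h : Lp E 1 μ) :
    HasSum (fun n ↦ indicatorL1 (hB n) h) h := by
  refine tendsto_iff_norm_sub_tendsto_zero.2 ?_
  have hrest (s : Finset ℕ) : ‖∑ n ∈ s, indicatorL1 (hB n) h - h‖
      = ‖h‖ - ∑ n ∈ s, normOn μ (B n) h := by
    have hU : MeasurableSet (⋃ n ∈ s, B n) := s.measurableSet_biUnion fun n _ ↦ hB n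
    rw [sum_indicatorL1 s hB hdisj, sum_normOn_eq s hB hdisj, norm_sub_rev,
      norm_sub_indicatorL1 hU, eq_sub_iff_add_eq', normOn_add_normOn_compl hU]
  simp only [hrest]
  simpa using (hasSum_normOn hB hdisj hcover h).const_sub ‖h‖

end LocalNorm

section Ell1Copy

variable {X : Type*} [NormedAddCommGroup X] [NormedSpace ℝ X] [CompleteSpace X]

lemma hasSum_abs_ell1 (a : ell1) : HasSum (fun k ↦ |a k|) ‖a‖ := by
  simpa using lp.hasSum_norm (p := 1) (by norm_num) a

lemma exists_ell1_equiv_of_lower_estimate {Z : Submodule ℝ X} (hZ : IsClosed (Z : Set X))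
    {f : ℕ → X} (hfZ : ∀ k, f k ∈ Z) {M : ℝ} (hf : ∀ k, ‖f k‖ ≤ M) {c : ℝ} (hc : 0 < c)
    (hlower : ∀ (s : Finset ℕ) (a : ℕ → ℝ), c * ∑ k ∈ s, |a k| ≤ ‖∑ k ∈ s, a k • f k‖) :
    ∃ W ≤ Z, Nonempty (W ≃L[ℝ] ell1) := by
  let F : lp (fun _ : ℕ ↦ X) ⊤ := ⟨f, memℓp_infty ⟨M, Set.forall_mem_range.2 hf⟩⟩
  let T : ell1 →L[ℝ] X := (lp.dualPairing 1 ⊤ (fun _ ↦ ContinuousLinearMap.lsmul ℝ ℝ)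
    (K := 1) fun _ ↦ ContinuousLinearMap.opNorm_lsmul_le).flip F
  have hT (a : ell1) : HasSum (fun k ↦ a k • f k) (T a) := by
    refine Summable.hasSum (.of_norm_bounded ((hasSum_abs_ell1 a).summable.mul_right M) fun k ↦ ?_)
    rw [norm_smul, Real.norm_eq_abs]
    exact mul_le_mul_of_nonneg_left (hf k) (abs_nonneg _)
  have hT_lower (a : ell1) : c * ‖a‖ ≤ ‖T a‖ :=
    le_of_tendsto_of_tendsto' ((hasSum_abs_ell1 a).mul_left c) (hT a).norm fun s ↦ by
      simpa only [Finset.mul_sum] using hlower s a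
  obtain ⟨K, hK⟩ := antilipschitzWith_iff_exists_mul_le_norm.2 ⟨c, hc, hT_lower⟩
  refine ⟨T.range, ?_, ⟨(T.equivRange hK.injective (hK.isClosed_range T.uniformContinuous)).symm⟩⟩
  rintro _ ⟨a, rfl⟩
  exact hZ.mem_of_tendsto (hT a)
    (.of_forall fun s ↦ Z.sum_mem fun k _ ↦ Z.smul_mem _ (hfZ k))

end Ell1Copy

section Equiintegrable

variable {α E : Type*} [MeasurableSpace α] {μ : Measure α} [NormedAddCommGroup E] [NormedSpace ℝ E]
  {Z : Submodule ℝ (Lp E 1 μ)}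

/-- `t` bounds, uniformly over the unit ball of `Z`, the `L¹`-norm carried by sets of small measure.
The infimum of all such `t` is the modulus of equi-integrability of the unit ball. -/
def IsConcentrationBound (Z : Submodule ℝ (Lp E 1 μ)) (t : ℝ) : Prop :=
  ∃ δ : ENNReal, 0 < δ ∧
    ∀ A, MeasurableSet A → μ A ≤ δ → ∀ z ∈ Z, normOn μ A z ≤ t * ‖z‖

/-- Equi-integrability of the unit ball of `Z`. -/
def HasEquiintegrableBall (Z : Submodule ℝ (Lp E 1 μ)) : Prop :=
  ∀ t > 0, IsConcentrationBound Z t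

lemma IsConcentrationBound.mono {s t : ℝ} (hs : IsConcentrationBound Z s) (hst : s ≤ t) :
    IsConcentrationBound Z t := by
  obtain ⟨δ, hδ, hbound⟩ := hs
  exact ⟨δ, hδ, fun A hA hAδ z hz ↦ (hbound A hA hAδ z hz).trans (by gcongr)⟩

lemma isConcentrationBound_one (Z : Submodule ℝ (Lp E 1 μ)) : IsConcentrationBound Z 1 :=
  ⟨1, one_pos, fun A _ _ z _ ↦ by simpa using normOn_le_norm A z⟩

lemma exists_concentration_threshold (hZ : ¬ HasEquiintegrableBall Z) :
    ∃ η > 0, (∀ t > η, IsConcentrationBound Z t) ∧ ∀ t < η, ¬ IsConcentrationBound Z t := by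
  simp only [HasEquiintegrableBall, not_forall] at hZ
  obtain ⟨t₀, ht₀, hnot⟩ := hZ
  have hlower : t₀ ∈ lowerBounds {t | IsConcentrationBound Z t} := fun t ht ↦
    le_of_not_ge fun htt₀ ↦ hnot (ht.mono htt₀)
  refine ⟨sInf {t | IsConcentrationBound Z t},
    ht₀.trans_le (le_csInf ⟨1, isConcentrationBound_one Z⟩ hlower), fun t ht ↦ ?_,
    fun t ht hbound ↦ ht.not_ge (csInf_le ⟨t₀, hlower⟩ hbound)⟩
  obtain ⟨s, hs, hst⟩ := exists_lt_of_csInf_lt ⟨1, isConcentrationBound_one Z⟩ ht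
  exact hs.mono hst.le

lemma exists_unit_concentrated {t : ℝ} (ht : ¬ IsConcentrationBound Z t) {δ : ENNReal}
    (hδ : 0 < δ) :
    ∃ z ∈ Z, ‖z‖ = 1 ∧ ∃ A, MeasurableSet A ∧ μ A ≤ δ ∧ t ≤ normOn μ A z := by
  simp only [IsConcentrationBound, not_exists, not_and, not_forall, not_le] at ht
  obtain ⟨A, hA, hAδ, z, hz, hlt⟩ := ht δ hδ
  have hz0 : z ≠ 0 := by
    rintro rfl
    simp at hlt
  refine ⟨‖z‖⁻¹ • z, Z.smul_mem _ hz, norm_smul_inv_norm hz0, A, hA, hAδ, ?_⟩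
  rw [map_smul_eq_mul, norm_inv, norm_norm, ← div_eq_inv_mul, le_div_iff₀ (norm_pos_iff.2 hz0)]
  exact hlt.le

lemma exists_disjoint_subsequence {A : ℕ → Set α} (hA : ∀ n, MeasurableSet (A n))
    (hsum : ∑' n, μ (A n) ≠ ⊤) {f : ℕ → Lp E 1 μ} {t : ℝ} (ht : ∀ n, t ≤ normOn μ (A n) (f n))
    {r : ℝ} (hr : 0 < r) :
    ∃ (φ : ℕ → ℕ) (B : ℕ → Set α), (∀ k, MeasurableSet (B k)) ∧
      Pairwise (Function.onFun Disjoint B) ∧ (∀ k, B k ⊆ A (φ k)) ∧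
      ∀ k, t - r ≤ normOn μ (B k) (f (φ k)) := by
  let tail (n : ℕ) : Set α := ⋃ i, A (i + n)
  have htail : Filter.Tendsto (μ ∘ tail) Filter.atTop (nhds 0) :=
    tendsto_of_tendsto_of_tendsto_of_le_of_le tendsto_const_nhds
      (ENNReal.tendsto_sum_nat_add _ hsum) (fun _ ↦ zero_le) fun _ ↦ measure_iUnion_le _
  have hnext (n : ℕ) : ∃ m > n, normOn μ (tail m) (f n) < r :=
    ((Filter.eventually_gt_atTop n).and
      ((tendsto_normOn_zero htail (f n)).eventually_lt_const hr)).exists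
  choose next hnext_gt hnext_small using hnext
  let φ (k : ℕ) : ℕ := next^[k] 0
  have hφ_succ (k : ℕ) : φ (k + 1) = next (φ k) := Function.iterate_succ_apply' next k 0
  have hφ : StrictMono φ := strictMono_nat_of_lt_succ fun k ↦ hφ_succ k ▸ hnext_gt (φ k)
  have htail_meas (n : ℕ) : MeasurableSet (tail n) := .iUnion fun i ↦ hA _
  refine ⟨φ, fun k ↦ A (φ k) \ tail (φ (k + 1)), fun k ↦ (hA _).diff (htail_meas _), ?_,
    fun k ↦ Set.sdiff_subset, fun k ↦ ?_⟩
  · refine (pairwise_disjoint_on _).2 fun j k hjk ↦ ?_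
    have hA_tail : A (φ k) ⊆ tail (φ (j + 1)) :=
      Set.subset_iUnion_of_subset (φ k - φ (j + 1))
        (by rw [Nat.sub_add_cancel (hφ.monotone hjk)])
    exact Set.disjoint_sdiff_left.mono_right (Set.sdiff_subset.trans hA_tail)
  · have hsplit := normOn_le_normOn_diff_add (A (φ k)) (htail_meas (φ (k + 1))) (f (φ k))
    have hsmall := hφ_succ k ▸ hnext_small (φ k)
    linarith [ht (φ k)]

lemma two_mul_sub_sum_le_seminorm_sum_smul {V ι : Type*} [AddCommGroup V] [Module ℝ V]
    (p : Seminorm ℝ V) {s : Finset ι} {i : ι} (hi : i ∈ s) (a : ι → ℝ) (f : ι → V) :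
    2 * (|a i| * p (f i)) - ∑ j ∈ s, |a j| * p (f j) ≤ p (∑ j ∈ s, a j • f j) := by
  classical
  have hoff : p (∑ j ∈ s.erase i, a j • f j) ≤ ∑ j ∈ s.erase i, |a j| * p (f j) :=
    (Finset.le_sum_of_subadditive p (map_zero p).le (map_add_le_add p) _ _).trans_eq
      (by simp only [map_smul_eq_mul, Real.norm_eq_abs])
  have hdiag : |a i| * p (f i) ≤ p (∑ j ∈ s, a j • f j) + p (∑ j ∈ s.erase i, a j • f j) := by
    have hsplit := Finset.add_sum_erase s (fun j ↦ a j • f j) hi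
    rw [← Real.norm_eq_abs, ← map_smul_eq_mul, eq_sub_of_add_eq hsplit]
    exact map_sub_le_add p _ _
  linarith [Finset.add_sum_erase s (fun j ↦ |a j| * p (f j)) hi]

lemma le_norm_sum_smul_of_disjoint {ι : Type*} {f : ι → Lp E 1 μ} {B : ι → Set α}
    (hB : ∀ i, MeasurableSet (B i)) (hdisj : Pairwise (Function.onFun Disjoint B)) {c d : ℝ}
    (hc : ∀ i, c ≤ normOn μ (B i) (f i)) (hd : ∀ i, normOn μ (⋃ j, B j) (f i) ≤ d)
    (s : Finset ι) (a : ι → ℝ) :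
    (2 * c - d) * ∑ i ∈ s, |a i| ≤ ‖∑ i ∈ s, a i • f i‖ := by
  have hpiece (i : ι) (hi : i ∈ s) :
      2 * (c * |a i|) - ∑ j ∈ s, |a j| * normOn μ (B i) (f j)
        ≤ normOn μ (B i) (∑ j ∈ s, a j • f j) := by
    have hdom := two_mul_sub_sum_le_seminorm_sum_smul (normOn μ (B i)) hi a f
    have hdiag := mul_le_mul_of_nonneg_left (hc i) (abs_nonneg (a i))
    linarith
  calc (2 * c - d) * ∑ i ∈ s, |a i|
      = ∑ i ∈ s, 2 * (c * |a i|) - ∑ j ∈ s, |a j| * d := by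
        rw [sub_mul, ← Finset.sum_mul, ← Finset.mul_sum, ← Finset.mul_sum]; ring
    _ ≤ ∑ i ∈ s, 2 * (c * |a i|) - ∑ j ∈ s, |a j| * ∑ i ∈ s, normOn μ (B i) (f j) := by
        gcongr with j
        rw [sum_normOn_eq s hB hdisj]
        exact (normOn_mono (Set.iUnion₂_subset_iUnion _ _) _).trans (hd j)
    _ = ∑ i ∈ s, (2 * (c * |a i|) - ∑ j ∈ s, |a j| * normOn μ (B i) (f j)) := by
        simp only [Finset.sum_sub_distrib, Finset.mul_sum]
        rw [Finset.sum_comm]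
    _ ≤ ∑ i ∈ s, normOn μ (B i) (∑ j ∈ s, a j • f j) := Finset.sum_le_sum hpiece
    _ ≤ ‖∑ i ∈ s, a i • f i‖ := by
        rw [sum_normOn_eq s hB hdisj]
        exact normOn_le_norm _ _

theorem exists_ell1_lower_estimate (hZ : ¬ HasEquiintegrableBall Z) :
    ∃ c > 0, ∃ f : ℕ → Lp E 1 μ, (∀ k, f k ∈ Z) ∧ (∀ k, ‖f k‖ = 1) ∧
      ∀ (s : Finset ℕ) (a : ℕ → ℝ), c * ∑ k ∈ s, |a k| ≤ ‖∑ k ∈ s, a k • f k‖ := by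
  obtain ⟨η, hη, habove, hbelow⟩ := exists_concentration_threshold hZ
  obtain ⟨δ, hδ, hbound⟩ := habove (η + η / 8) (by linarith)
  obtain ⟨δ', hδ', hδ'_sum⟩ := ENNReal.exists_pos_sum_of_countable' hδ.ne' ℕ
  choose f hfZ hf A hA hAδ hfA using fun n ↦
    exists_unit_concentrated (hbelow (η - η / 8) (by linarith)) (hδ' n)
  have hA_sum : ∑' n, μ (A n) ≤ δ := (ENNReal.tsum_le_tsum hAδ).trans hδ'_sum.le
  obtain ⟨φ, B, hB, hdisj, hBA, hfB⟩ := exists_disjoint_subsequence hA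
    ((ENNReal.tsum_le_tsum hAδ).trans_lt (hδ'_sum.trans_le le_top)).ne hfA
    (show 0 < η / 8 by positivity)
  have hB_small : μ (⋃ k, B k) ≤ δ :=
    (measure_mono (Set.iUnion_subset fun k ↦ Set.subset_iUnion_of_subset _ (hBA k))).trans
      ((measure_iUnion_le A).trans hA_sum)
  have hfB_le (k : ℕ) : normOn μ (⋃ j, B j) (f (φ k)) ≤ η + η / 8 := by
    simpa [hf] using hbound _ (.iUnion hB) hB_small _ (hfZ (φ k))
  exact ⟨2 * (η - η / 8 - η / 8) - (η + η / 8), by linarith, f ∘ φ, fun k ↦ hfZ _, fun k ↦ hf _,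
    le_norm_sum_smul_of_disjoint hB hdisj hfB hfB_le⟩

theorem hasEquiintegrableBall_of_no_ell1 [CompleteSpace E] (hZ : IsClosed (Z : Set (Lp E 1 μ)))
    (hno : ¬ ∃ W ≤ Z, Nonempty (W ≃L[ℝ] ell1)) : HasEquiintegrableBall Z := by
  by_contra hequi
  obtain ⟨c, hc, f, hfZ, hf, hlower⟩ := exists_ell1_lower_estimate hequi
  exact hno (exists_ell1_equiv_of_lower_estimate hZ hfZ (fun k ↦ (hf k).le) hc hlower)

end Equiintegrable

section Reflexivity

open NormedSpace

variable {X Y Z : Type*} [NormedAddCommGroup X] [NormedSpace ℝ X] [NormedAddCommGroup Y]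
  [NormedSpace ℝ Y] [NormedAddCommGroup Z] [NormedSpace ℝ Z]

lemma surjective_inclusionInDoubleDual_of_innerProductSpace {H : Type*} [NormedAddCommGroup H]
    [InnerProductSpace ℝ H] [CompleteSpace H] :
    Function.Surjective (inclusionInDoubleDual ℝ H) := by
  intro F
  let riesz : H →L[ℝ] StrongDual ℝ H := (isBoundedBilinearMap_inner (𝕜 := ℝ)).toContinuousLinearMap
  refine ⟨(InnerProductSpace.toDual ℝ H).symm (F.comp riesz), ?_⟩
  ext ψ
  obtain ⟨w, rfl⟩ := (InnerProductSpace.toDual ℝ H).surjective ψ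
  rw [dual_def, InnerProductSpace.toDual_apply_apply, real_inner_comm,
    InnerProductSpace.toDual_symm_apply]
  rfl

lemma exists_dual_factor_of_le_seminorm {V : Type*} [AddCommGroup V] [Module ℝ V] (S : V →ₗ[ℝ] X)
    (G : V →ₗ[ℝ] ℝ) {p : Seminorm ℝ X} (hp : Continuous p) (hG : ∀ v, ‖G v‖ ≤ p (S v)) :
    ∃ g : StrongDual ℝ X, (∀ v, g (S v) = G v) ∧ ∀ x, ‖g x‖ ≤ p x := by
  have hker : G ∈ S.ker.dualAnnihilator := by
    refine (Submodule.mem_dualAnnihilator G).2 fun v hv ↦ norm_le_zero_iff.1 ?_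
    simpa [LinearMap.mem_ker.1 hv] using hG v
  rw [← LinearMap.range_dualMap_eq_dualAnnihilator_ker] at hker
  obtain ⟨h, rfl⟩ := hker
  obtain ⟨g, hg, hgp⟩ := Module.Dual.exists_continuous_extension_of_le_seminorm S.range
    (h.domRestrict S.range) hp (by rintro ⟨_, v, rfl⟩; exact hG v)
  exact ⟨g, fun v ↦ hg ⟨S v, v, rfl⟩, hgp⟩

lemma norm_comp_le_of_unit_ball_approx (i : Z →L[ℝ] X) (T : Y →L[ℝ] X) {M ε : NNReal}
    (happrox : ∀ z, ‖z‖ ≤ 1 → ∃ y, ‖y‖ ≤ M ∧ ‖i z - T y‖ ≤ ε) (ψ : StrongDual ℝ X) :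
    ‖ψ.comp i‖ ≤ M * ‖ψ.comp T‖ + ε * ‖ψ‖ := by
  refine ContinuousLinearMap.opNorm_le_of_unit_norm (by positivity) fun z hz ↦ ?_
  obtain ⟨y, hy, hzy⟩ := happrox z hz.le
  calc ‖ψ (i z)‖ = ‖ψ.comp T y + ψ (i z - T y)‖ := by simp
    _ ≤ ‖ψ.comp T y‖ + ‖ψ (i z - T y)‖ := norm_add_le _ _
    _ ≤ ‖ψ.comp T‖ * M + ‖ψ‖ * ε :=
      add_le_add ((ψ.comp T).le_opNorm_of_le hy) (ψ.le_opNorm_of_le hzy)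
    _ = M * ‖ψ.comp T‖ + ε * ‖ψ‖ := by ring

lemma exists_norm_sub_inclusionInDoubleDual_le
    (hY : Function.Surjective (inclusionInDoubleDual ℝ Y)) (i : Z →L[ℝ] X) (T : Y →L[ℝ] X)
    {M ε : NNReal} (happrox : ∀ z, ‖z‖ ≤ 1 → ∃ y, ‖y‖ ≤ M ∧ ‖i z - T y‖ ≤ ε)
    (F : StrongDual ℝ (StrongDual ℝ Z)) :
    ∃ x, ‖F.comp (i.precomp ℝ) - inclusionInDoubleDual ℝ X x‖ ≤ ‖F‖ * ε := by
  -- `F ∘ i*` factors through `S` below the seminorm `p`; extend it to all of `Y* × X*` by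
  -- Hahn-Banach. The `Y*`-component of the extension is a point of `Y`, the other is the error.
  let S : StrongDual ℝ X →L[ℝ] StrongDual ℝ Y × StrongDual ℝ X := (T.precomp ℝ).prod (.id ℝ _)
  let p : Seminorm ℝ (StrongDual ℝ Y × StrongDual ℝ X) :=
    ‖F‖₊ • (M • (normSeminorm ℝ _).comp (.fst ℝ _ _) + ε • (normSeminorm ℝ _).comp (.snd ℝ _ _))
  have hp : Continuous p := by
    change Continuous fun q : StrongDual ℝ Y × StrongDual ℝ X ↦ ‖F‖ * (M * ‖q.1‖ + ε * ‖q.2‖)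
    fun_prop
  obtain ⟨g, hgS, hgp⟩ := exists_dual_factor_of_le_seminorm S.toLinearMap
    (F.comp (i.precomp ℝ)).toLinearMap hp fun ψ ↦
      F.le_opNorm_of_le (norm_comp_le_of_unit_ball_approx i T happrox ψ)
  obtain ⟨y, hy⟩ := hY (g.comp (.inl ℝ _ _))
  refine ⟨T y, ContinuousLinearMap.opNorm_le_bound _ (by positivity) fun ψ ↦ ?_⟩
  have hg_fst : g (ψ.comp T, 0) = ψ (T y) := (DFunLike.congr_fun hy (ψ.comp T)).symm
  have hg_snd : F (ψ.comp i) - ψ (T y) = g (0, ψ) := by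
    have hsplit : g (S ψ) = g (ψ.comp T, 0) + g (0, ψ) := by
      rw [← map_add, Prod.mk_add_mk, add_zero, zero_add]; rfl
    rw [sub_eq_iff_eq_add', ← hg_fst, ← hsplit]
    exact (hgS ψ).symm
  calc ‖F (ψ.comp i) - ψ (T y)‖ = ‖g (0, ψ)‖ := by rw [hg_snd]
    _ ≤ ‖F‖ * (M * ‖(0 : StrongDual ℝ Y)‖ + ε * ‖ψ‖) := hgp (0, ψ)
    _ = ‖F‖ * ε * ‖ψ‖ := by rw [norm_zero]; ring

lemma bidual_map_mem_range [CompleteSpace X]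
    (hY : Function.Surjective (inclusionInDoubleDual ℝ Y)) (i : Z →L[ℝ] X) (T : Y →L[ℝ] X)
    (happrox : ∀ ε : NNReal, 0 < ε → ∃ M : NNReal, ∀ z, ‖z‖ ≤ 1 →
      ∃ y, ‖y‖ ≤ M ∧ ‖i z - T y‖ ≤ ε)
    (F : StrongDual ℝ (StrongDual ℝ Z)) :
    F.comp (i.precomp ℝ) ∈ Set.range (inclusionInDoubleDual ℝ X) := by
  have hisom : Isometry (inclusionInDoubleDual ℝ X) := (inclusionInDoubleDualLi ℝ).isometry
  refine hisom.isClosedEmbedding.isClosed_range.closure_subset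
    (Metric.mem_closure_range_iff.2 fun ε hε ↦ ?_)
  obtain ⟨M, hM⟩ := happrox ⟨ε / (‖F‖ + 1), by positivity⟩ (show 0 < ε / (‖F‖ + 1) by positivity)
  obtain ⟨x, hx⟩ := exists_norm_sub_inclusionInDoubleDual_le hY i T hM F
  refine ⟨x, (dist_eq_norm _ _).trans_lt (hx.trans_lt ?_)⟩
  change ‖F‖ * (ε / (‖F‖ + 1)) < ε
  rw [← mul_div_assoc, div_lt_iff₀ (by positivity)]
  linarith

theorem surjective_inclusionInDoubleDual_of_approx [CompleteSpace X]
    (hY : Function.Surjective (inclusionInDoubleDual ℝ Y)) (T : Y →L[ℝ] X)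
    {Z : Submodule ℝ X} (hZ : IsClosed (Z : Set X))
    (happrox : ∀ ε : NNReal, 0 < ε → ∃ M : NNReal, ∀ z ∈ Z, ‖z‖ ≤ 1 →
      ∃ y, ‖y‖ ≤ M ∧ ‖z - T y‖ ≤ ε) :
    Function.Surjective (inclusionInDoubleDual ℝ Z) := by
  intro F
  obtain ⟨x, hx⟩ := bidual_map_mem_range hY Z.subtypeL T
    (fun ε hε ↦ (happrox ε hε).imp fun M hM z hz ↦ hM z z.2 hz) F
  have hFx (ψ : StrongDual ℝ X) : F (ψ.comp Z.subtypeL) = ψ x := (DFunLike.congr_fun hx ψ).symm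
  have hxZ : x ∈ Z := by
    refine (Submodule.Quotient.mk_eq_zero Z).1
      (SeparatingDual.eq_zero_of_forall_dual_eq_zero (R := ℝ) fun χ ↦ ?_)
    have hvanish : (χ.comp Z.mkQL).comp Z.subtypeL = 0 := by
      ext z
      simp [(Submodule.Quotient.mk_eq_zero Z).2 z.2]
    simpa [hvanish] using (hFx (χ.comp Z.mkQL)).symm
  refine ⟨⟨x, hxZ⟩, ?_⟩
  ext χ
  obtain ⟨ψ, hψ, -⟩ := exists_extension_norm_eq Z χ
  have hψχ : ψ.comp Z.subtypeL = χ := ContinuousLinearMap.ext hψ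
  rw [dual_def, ← hψχ, hFx]
  rfl

end Reflexivity

section HilbertApproximation

variable {α E : Type*} [MeasurableSpace α] {μ : Measure α} [NormedAddCommGroup E]

lemma measurableSet_le_nnnorm_coeFn (z : Lp E 1 μ) (c : NNReal) :
    MeasurableSet {x | c ≤ ‖z x‖₊} :=
  measurableSet_le measurable_const (Lp.stronglyMeasurable z).nnnorm.measurable

variable [IsFiniteMeasure μ]

/-- The inclusion `L²(μ; E) → L¹(μ; E)` for a finite measure `μ`, encoded as the Hölder product
with the constant function `1`. -/
noncomputable def l2ToL1 [NormedSpace ℝ E] : Lp E 2 μ →L[ℝ] Lp E 1 μ :=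
  (ContinuousLinearMap.lsmul ℝ ℝ).holderL μ 2 2 1 (Lp.const 2 μ (1 : ℝ))

lemma coeFn_l2ToL1 [NormedSpace ℝ E] (y : Lp E 2 μ) : l2ToL1 y =ᵐ[μ] y := by
  filter_upwards [(ContinuousLinearMap.lsmul ℝ ℝ).coeFn_holder (r := 1)
    (Lp.const 2 μ (1 : ℝ)) y, Lp.coeFn_const 2 μ (1 : ℝ)] with x hx hone
  rw [l2ToL1, ContinuousLinearMap.holderL_apply_apply, hx, hone, Function.const_apply,
    ContinuousLinearMap.lsmul_apply, one_smul]

lemma exists_norm_sub_l2ToL1_eq_normOn [NormedSpace ℝ E] (z : Lp E 1 μ) (c : NNReal) :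
    ∃ y : Lp E 2 μ, ‖y‖ ≤ measureUnivNNReal μ ^ (2 : ENNReal).toReal⁻¹ * c ∧
      ‖z - l2ToL1 y‖ = normOn μ {x | c ≤ ‖z x‖₊} z := by
  set A : Set α := {x | c ≤ ‖z x‖₊}
  have hA : MeasurableSet A := measurableSet_le_nnnorm_coeFn z c
  have hbound (x : α) : ‖Aᶜ.indicator z x‖ ≤ c :=
    (norm_indicator_eq_indicator_norm z x).trans_le
      (Set.indicator_apply_le' (fun hx ↦ (not_le.1 (Set.notMem_of_mem_compl hx)).le) fun _ ↦ c.2)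
  have hmem : MemLp (Aᶜ.indicator z) 2 μ :=
    .of_bound ((Lp.aestronglyMeasurable z).indicator hA.compl) c (.of_forall hbound)
  refine ⟨hmem.toLp _, Lp.norm_le_of_ae_bound c.2 ?_, ?_⟩
  · filter_upwards [hmem.coeFn_toLp] with x hx
    exact hx ▸ hbound x
  · have htrunc : l2ToL1 (hmem.toLp _) = indicatorL1 hA.compl z :=
      Lp.ext (((coeFn_l2ToL1 _).trans hmem.coeFn_toLp).trans (coeFn_indicatorL1 _ _).symm)
    rw [htrunc, norm_sub_indicatorL1, compl_compl]

theorem HasEquiintegrableBall.surjective_inclusionInDoubleDual [InnerProductSpace ℝ E]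
    [CompleteSpace E] {Z : Submodule ℝ (Lp E 1 μ)} (hequi : HasEquiintegrableBall Z)
    (hZ : IsClosed (Z : Set (Lp E 1 μ))) :
    Function.Surjective (NormedSpace.inclusionInDoubleDual ℝ Z) := by
  refine surjective_inclusionInDoubleDual_of_approx
    surjective_inclusionInDoubleDual_of_innerProductSpace (l2ToL1 (E := E) (μ := μ)) hZ
    fun ε hε ↦ ?_
  obtain ⟨δ, hδ, hbound⟩ := hequi ε hε
  obtain ⟨n, hn⟩ := ENNReal.exists_inv_nat_lt hδ.ne'
  refine ⟨measureUnivNNReal μ ^ (2 : ENNReal).toReal⁻¹ * n, fun z hz hz1 ↦ ?_⟩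
  obtain ⟨y, hy, hzy⟩ := exists_norm_sub_l2ToL1_eq_normOn z n
  have hn0 : (n : ENNReal) ≠ 0 := ENNReal.inv_ne_top.1 (hn.trans_le le_top).ne
  have hmarkov : μ {x | (n : NNReal) ≤ ‖z x‖₊} ≤ δ := by
    calc μ {x | (n : NNReal) ≤ ‖z x‖₊} = μ {x | (n : ENNReal) ≤ ‖z x‖₊} := by norm_cast
      _ ≤ (n : ENNReal)⁻¹ * ENNReal.ofReal ‖z‖ := by
        simpa using Lp.meas_ge_le_mul_pow_enorm z one_ne_zero ENNReal.one_ne_top hn0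
      _ ≤ (n : ENNReal)⁻¹ := mul_le_of_le_one_right' (ENNReal.ofReal_le_one.2 hz1)
      _ ≤ δ := hn.le
  refine ⟨y, hy, hzy.trans_le
    ((hbound _ (measurableSet_le_nnnorm_coeFn z n) hmarkov z hz).trans ?_)⟩
  exact mul_le_of_le_one_right ε.2 hz1

end HilbertApproximation

section Daugavet

lemma daugavetProperty_of_forall_exists {X : Type*} [SeminormedAddCommGroup X] [NormedSpace ℝ X]
    (h : ∀ (f : X →L[ℝ] ℝ) (x : X), ∀ ε > 0,
      ∃ y, ‖y‖ ≤ 1 ∧ ‖f‖ - ε ≤ f y ∧ 1 + ‖x‖ - ε ≤ ‖y + x‖) :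
    DaugavetProperty X := by
  intro f x
  have hT : ‖f.smulRight x‖ = ‖f‖ * ‖x‖ := ContinuousLinearMap.norm_smulRight_apply f x
  refine le_antisymm ((norm_add_le _ _).trans
    (add_le_add_left ContinuousLinearMap.norm_id_le _)) (le_of_forall_pos_le_add fun ε hε ↦ ?_)
  obtain ⟨y, hy, hfy, hyx⟩ := h f (‖f‖ • x) (ε / (1 + ‖x‖)) (by positivity)
  have hfy_le : f y ≤ ‖f‖ := (le_abs_self _).trans (f.unit_le_opNorm y hy)
  calc 1 + ‖f.smulRight x‖
      ≤ ‖y + ‖f‖ • x‖ + ε / (1 + ‖x‖) := by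
        rw [hT, ← sub_le_iff_le_add]
        simpa [norm_smul] using hyx
    _ ≤ ‖y + f y • x‖ + ‖(‖f‖ - f y) • x‖ + ε / (1 + ‖x‖) := by
        gcongr
        refine (congrArg norm ?_).trans_le (norm_add_le _ _)
        module
    _ ≤ ‖y + f y • x‖ + ε / (1 + ‖x‖) * ‖x‖ + ε / (1 + ‖x‖) := by
        rw [norm_smul, Real.norm_of_nonneg (sub_nonneg.2 hfy_le)]
        gcongr
        linarith
    _ = ‖(.id ℝ X + f.smulRight x) y‖ + ε := by
        rw [add_assoc, ← mul_add_one, add_comm ‖x‖, div_mul_cancel₀ _ (by positivity)]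
        rfl
    _ ≤ ‖.id ℝ X + f.smulRight x‖ + ε := by
        gcongr
        exact ContinuousLinearMap.unit_le_opNorm _ y hy

lemma le_norm_mkQ_iff {X : Type*} [SeminormedAddCommGroup X] [NormedSpace ℝ X] {Z : Submodule ℝ X}
    {x : X} {a : ℝ} : a ≤ ‖Z.mkQ x‖ ↔ ∀ z ∈ Z, a ≤ ‖x - z‖ := by
  have hnorm : ‖Z.mkQ x‖ = Metric.infDist x (Z : Set X) := QuotientAddGroup.norm_mk x
  simp only [hnorm, Metric.le_infDist Z.nonempty, dist_eq_norm, SetLike.mem_coe]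

lemma opNorm_le_opNorm_comp_mkQL {X : Type*} [SeminormedAddCommGroup X] [NormedSpace ℝ X]
    {Z : Submodule ℝ X} (f : X ⧸ Z →L[ℝ] ℝ) : ‖f‖ ≤ ‖f.comp Z.mkQL‖ := by
  refine f.opNorm_le_bound (norm_nonneg _) fun q ↦ ?_
  have hbound : ∀ b > ‖q‖, ‖f q‖ ≤ ‖f.comp Z.mkQL‖ * b := by
    intro b hb
    obtain ⟨x, rfl, hx⟩ := QuotientAddGroup.norm_lt_iff.1 hb
    exact (f.comp Z.mkQL).le_opNorm_of_le hx.le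
  exact ge_of_tendsto (x := nhdsWithin ‖q‖ (Set.Ioi ‖q‖))
    (((continuous_const_mul _).tendsto _).mono_left nhdsWithin_le_nhds)
    (eventually_mem_nhdsWithin.mono hbound)

lemma exists_mul_norm_lt_of_lt_opNorm {X : Type*} [NormedAddCommGroup X] [NormedSpace ℝ X]
    [Nontrivial X] {G : X →L[ℝ] ℝ} {c : ℝ} (hc : c < ‖G‖) : ∃ x, c * ‖x‖ < G x := by
  by_contra! h
  have habs (x : X) : ‖G x‖ ≤ c * ‖x‖ := abs_le'.2 ⟨h x, by simpa using h (-x)⟩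
  obtain ⟨x, hx⟩ := exists_ne (0 : X)
  have hc0 : 0 ≤ c :=
    nonneg_of_mul_nonneg_left ((norm_nonneg _).trans (habs x)) (norm_pos_iff.2 hx)
  exact hc.not_ge (G.opNorm_le_bound hc0 habs)

lemma exists_measurable_partition_measure_le {α : Type*} [TopologicalSpace α]
    [SecondCountableTopology α] [MeasurableSpace α] [OpensMeasurableSpace α] (μ : Measure α)
    [μ.OuterRegular] [NullSingletonClass μ] {δ : ENNReal} (hδ : 0 < δ) :
    ∃ B : ℕ → Set α, (∀ n, MeasurableSet (B n)) ∧ Pairwise (Function.onFun Disjoint B) ∧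
      ⋃ n, B n = Set.univ ∧ ∀ n, μ (B n) ≤ δ := by
  have hsmall (x : α) : ∃ U, x ∈ U ∧ IsOpen U ∧ μ U < δ := by
    obtain ⟨U, hxU, hU, hUδ⟩ :=
      Set.exists_isOpen_lt_of_lt (μ := μ) {x} δ (by rwa [measure_singleton])
    exact ⟨U, hxU rfl, hU, hUδ⟩
  choose U hxU hU hUδ using hsmall
  obtain ⟨s, hs, hs_cover⟩ :=
    TopologicalSpace.countable_cover_nhds fun x ↦ (hU x).mem_nhds (hxU x)
  obtain ⟨V, hV, hV_cover⟩ := (Set.exists_seq_cover_iff_countable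
    (p := fun V ↦ IsOpen V ∧ μ V < δ) ⟨∅, isOpen_empty, by simpa⟩).2
    ⟨U '' s, hs.image U, Set.forall_mem_image.2 fun x _ ↦ ⟨hU x, hUδ x⟩,
      by rwa [Set.sUnion_image]⟩
  exact ⟨disjointed V, MeasurableSet.disjointed fun n ↦ (hV n).1.measurableSet,
    disjoint_disjointed V, by rw [iUnion_disjointed, hV_cover],
    fun n ↦ (measure_mono (disjointed_subset V n)).trans (hV n).2.le⟩

variable {α E : Type*} [MeasurableSpace α] {μ : Measure α} [NormedAddCommGroup E] [NormedSpace ℝ E]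

lemma exists_unit_supported_of_lt_opNorm [Nontrivial (Lp E 1 μ)] {G : Lp E 1 μ →L[ℝ] ℝ} {c : ℝ}
    (hc : c < ‖G‖) {B : ℕ → Set α} (hB : ∀ n, MeasurableSet (B n))
    (hdisj : Pairwise (Function.onFun Disjoint B)) (hcover : ⋃ n, B n = Set.univ) :
    ∃ n y, ‖y‖ = 1 ∧ normOn μ (B n)ᶜ y = 0 ∧ c < G y := by
  obtain ⟨x, hx⟩ := exists_mul_norm_lt_of_lt_opNorm hc
  obtain ⟨n, hn⟩ : ∃ n, c * ‖indicatorL1 (hB n) x‖ < G (indicatorL1 (hB n) x) := by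
    by_contra! hle
    simp only [norm_indicatorL1] at hle
    exact hx.not_ge (hasSum_le hle ((hasSum_indicatorL1 hB hdisj hcover x).mapL G)
      ((hasSum_normOn hB hdisj hcover x).mul_left c))
  set y : Lp E 1 μ := indicatorL1 (hB n) x
  have hy : y ≠ 0 := by
    intro hy
    simp [hy] at hn
  refine ⟨n, ‖y‖⁻¹ • y, norm_smul_inv_norm hy, ?_, ?_⟩
  · rw [map_smul_eq_mul, normOn_indicatorL1, Set.compl_inter_self]
    simp [normOn_apply]
  · rwa [map_smul, smul_eq_mul, ← div_eq_inv_mul, lt_div_iff₀ (norm_pos_iff.2 hy)]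

lemma norm_add_norm_sub_le_norm_add {A : Set α} (hA : MeasurableSet A) {y : Lp E 1 μ}
    (hy : normOn μ Aᶜ y = 0) (w : Lp E 1 μ) :
    ‖y‖ + ‖w‖ - 2 * normOn μ A w ≤ ‖y + w‖ := by
  have hon : normOn μ A y ≤ normOn μ A (y + w) + normOn μ A w := by
    simpa using map_sub_le_add (normOn μ A) (y + w) w
  have hoff : normOn μ Aᶜ w ≤ normOn μ Aᶜ (y + w) + normOn μ Aᶜ y := by
    simpa using map_sub_le_add (normOn μ Aᶜ) (y + w) y
  linarith [normOn_add_normOn_compl hA y, normOn_add_normOn_compl hA w,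
    normOn_add_normOn_compl hA (y + w)]

lemma exists_normOn_le_of_measure_le (x : Lp E 1 μ) {t : ℝ} (ht : 0 < t) :
    ∃ δ > 0, ∀ A, μ A ≤ δ → normOn μ A x ≤ t := by
  have hlim : Filter.Tendsto (fun A ↦ normOn μ A x) ((nhds 0).comap μ) (nhds 0) :=
    tendsto_normOn_zero Filter.tendsto_comap x
  exact (ENNReal.nhds_zero_basis_Iic.comap μ).eventually_iff.1 (hlim.eventually_le_const ht)

variable {Z : Submodule ℝ (Lp E 1 μ)}

lemma HasEquiintegrableBall.exists_normOn_sub_le (hequi : HasEquiintegrableBall Z) (x : Lp E 1 μ)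
    {t : ℝ} (ht : 0 < t) :
    ∃ δ > 0, ∀ A, MeasurableSet A → μ A ≤ δ →
      ∀ z ∈ Z, normOn μ A (x - z) ≤ t * (1 + ‖z‖) := by
  obtain ⟨δ, hδ, hz⟩ := hequi t ht
  obtain ⟨δ', hδ', hx⟩ := exists_normOn_le_of_measure_le x ht
  refine ⟨min δ δ', lt_min hδ hδ', fun A hA hAδ z hzZ ↦ ?_⟩
  calc normOn μ A (x - z) ≤ normOn μ A x + normOn μ A z := map_sub_le_add _ _ _
    _ ≤ t + t * ‖z‖ :=
      add_le_add (hx A (hAδ.trans (min_le_right _ _))) (hz A hA (hAδ.trans (min_le_left _ _)) z hzZ)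
    _ = t * (1 + ‖z‖) := by ring

lemma HasEquiintegrableBall.exists_two_mul_normOn_sub_le (hequi : HasEquiintegrableBall Z)
    (x : Lp E 1 μ) {ε : ℝ} (hε : 0 < ε) :
    ∃ δ > 0, ∀ A, MeasurableSet A → μ A ≤ δ →
      ∀ z ∈ Z, 2 * normOn μ A (x - z) ≤ ε + (‖x - z‖ - ‖Z.mkQ x‖) := by
  obtain ⟨t, ht, ht_half, htε⟩ : ∃ t > 0, 2 * t ≤ 1 ∧ t * (2 + 4 * ‖x‖) ≤ ε :=
    ⟨min (1 / 2) (ε / (2 + 4 * ‖x‖)), by positivity,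
      by linarith [min_le_left (1 / 2 : ℝ) (ε / (2 + 4 * ‖x‖))],
      (le_div_iff₀ (by positivity)).1 (min_le_right _ _)⟩
  obtain ⟨δ, hδ, hsmall⟩ := hequi.exists_normOn_sub_le x ht
  refine ⟨δ, hδ, fun A hA hAδ z hz ↦ ?_⟩
  have hz_norm : ‖z‖ ≤ ‖x - z‖ + ‖x‖ := by
    simpa [add_comm] using norm_sub_le x (x - z)
  have hx : ‖Z.mkQ x‖ ≤ ‖x‖ := Submodule.Quotient.norm_mk_le Z x
  have hxz : ‖Z.mkQ x‖ ≤ ‖x - z‖ := le_norm_mkQ_iff.1 le_rfl z hz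
  calc 2 * normOn μ A (x - z)
      ≤ 2 * (t * (1 + (‖x - z‖ + ‖x‖))) := by
        gcongr
        exact (hsmall A hA hAδ z hz).trans (by gcongr)
    _ = t * (2 + 2 * ‖x‖ + 2 * ‖Z.mkQ x‖) + 2 * t * (‖x - z‖ - ‖Z.mkQ x‖) := by ring
    _ ≤ t * (2 + 2 * ‖x‖ + 2 * ‖x‖) + 1 * (‖x - z‖ - ‖Z.mkQ x‖) := by
        gcongr
    _ ≤ ε + (‖x - z‖ - ‖Z.mkQ x‖) := by linarith

lemma HasEquiintegrableBall.exists_le_norm_mkQ_add (hequi : HasEquiintegrableBall Z)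
    (x : Lp E 1 μ) {ε : ℝ} (hε : 0 < ε) :
    ∃ δ > 0, ∀ A, MeasurableSet A → μ A ≤ δ → ∀ y, normOn μ Aᶜ y = 0 →
      ‖y‖ + ‖Z.mkQ x‖ - ε ≤ ‖Z.mkQ (y + x)‖ := by
  obtain ⟨δ, hδ, hsmall⟩ := hequi.exists_two_mul_normOn_sub_le x hε
  refine ⟨δ, hδ, fun A hA hAδ y hy ↦ le_norm_mkQ_iff.2 fun z hz ↦ ?_⟩
  have hdisj : ‖y‖ + ‖x - z‖ - 2 * normOn μ A (x - z) ≤ ‖y + x - z‖ := by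
    simpa only [add_sub_assoc y x z] using norm_add_norm_sub_le_norm_add hA hy (x - z)
  linarith [hsmall A hA hAδ z hz]

theorem HasEquiintegrableBall.daugavetProperty_quotient [TopologicalSpace α]
    [SecondCountableTopology α] [OpensMeasurableSpace α] [μ.OuterRegular] [NullSingletonClass μ]
    [Nontrivial (Lp E 1 μ)] (hequi : HasEquiintegrableBall Z) :
    DaugavetProperty (Lp E 1 μ ⧸ Z) := by
  refine daugavetProperty_of_forall_exists fun f q ε hε ↦ ?_
  obtain ⟨x, rfl⟩ := Z.mkQ_surjective q
  obtain ⟨δ, hδ, hadd⟩ := hequi.exists_le_norm_mkQ_add x hε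
  obtain ⟨B, hB, hdisj, hcover, hBδ⟩ := exists_measurable_partition_measure_le μ hδ
  obtain ⟨n, y, hy, hy_supp, hfy⟩ := exists_unit_supported_of_lt_opNorm
    ((sub_lt_self _ hε).trans_le (opNorm_le_opNorm_comp_mkQL f)) hB hdisj hcover
  exact ⟨Z.mkQ y, (Submodule.Quotient.norm_mk_le Z y).trans hy.le, hfy.le,
    by simpa only [hy, map_add] using hadd (B n) (hB n) (hBδ n) y hy_supp⟩

end Daugavet

theorem quotient_daugavet_of_no_ell1_L1_general {α E : Type*} [TopologicalSpace α]
    [SecondCountableTopology α] [MeasurableSpace α] [OpensMeasurableSpace α]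
    [NormedAddCommGroup E] [InnerProductSpace ℝ E] [CompleteSpace E] {μ : Measure α}
    [IsFiniteMeasure μ] [μ.OuterRegular] [NullSingletonClass μ] [Nontrivial (Lp E 1 μ)]
    (Z : Submodule ℝ (Lp E 1 μ)) (hZ : IsClosed (Z : Set (Lp E 1 μ)))
    (hno : ¬ ∃ W ≤ Z, Nonempty (W ≃L[ℝ] ell1)) :
    Function.Surjective (NormedSpace.inclusionInDoubleDual ℝ Z) ∧
      DaugavetProperty (Lp E 1 μ ⧸ Z) := by
  have hequi : HasEquiintegrableBall Z := hasEquiintegrableBall_of_no_ell1 hZ hno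
  exact ⟨hequi.surjective_inclusionInDoubleDual hZ, hequi.daugavetProperty_quotient⟩

instance : IsProbabilityMeasure mu01 := ⟨by simp [mu01]⟩

instance : mu01.OuterRegular := by
  unfold mu01
  infer_instance

instance : NullSingletonClass mu01 := by
  unfold mu01
  infer_instance

instance : Nontrivial L1 :=
  nontrivial_of_ne (Lp.const 1 mu01 1) 0 fun h ↦ by
    simpa [Lp.norm_const'] using congrArg norm h

/-- If a closed subspace `Z ⊆ L¹[0,1]` contains no subspace isomorphic to `ℓ¹`, then
`Z` is reflexive (the canonical embedding into the double dual is surjective) and the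
quotient `L¹[0,1]/Z` has the Daugavet property. -/
theorem quotient_daugavet_of_no_ell1_L1
    (Z : Submodule ℝ L1) (hZc : IsClosed (Z : Set L1))
    (hno : ¬ ∃ W : Submodule ℝ L1, W ≤ Z ∧ Nonempty (↥W ≃L[ℝ] ell1)) :
    Function.Surjective (NormedSpace.inclusionInDoubleDual ℝ ↥Z) ∧
      DaugavetProperty (L1 ⧸ Z) :=
  quotient_daugavet_of_no_ell1_L1_general Z hZc hno
end
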